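/- Let X = ℝ/2πℤ be the circle with normalized Haar probability measure λ, and let Ω = ℝ → X carry the product σ-algebra. For x ∈ X define the path z_x : ℝ → X by z_x(t) = x + min(max(t,0), π/2), and let q be the pushforward of λ under the map x ↦ z_x. Then: (i) q is a generalized incompressible flow, i.e. for every t₀ ∈ ℝ the pushforward of q under z ↦ z(t₀) equals λ; and (ii) q({z ∈ Ω : z(t) = z(π/2) for all t ≥ π/2}) = 1, so q-almost every path is constant from time π/2 on (in particular, q-almost every path is not recurrent). -/

import Mathlib

/-!
Under the flow map `x ↦ z_x`, evaluation at a fixed time `t₀` becomes translation by a constant,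
which preserves Haar measure; this gives incompressibility. Moreover every path `z_x` is constant
from time `π / 2` on. The set of all such paths is an uncountable intersection of cylinders, so it
need not be measurable for the product σ-algebra, and `q` of it is an outer measure; but
`Measure.le_map_apply` bounds a pushforward below by the measure of the preimage for arbitrary
sets, and the preimage here is the whole circle.
-/

open MeasureTheory Real

/-- The generalized flow on the circle obtained by pushing forward
normalized Haar measure under `x ↦ (t ↦ x + min (max t 0) (π/2))` is a generalized
incompressible flow, yet `q`-almost every path is constant from time `π/2` on. -/
theorem gif_counterexample_no_recurrence [Fact (0 < 2 * π)]
    (q : Measure (ℝ → AddCircle (2 * π)))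
    (hq : q = (AddCircle.haarAddCircle (T := 2 * π)).map
      (fun x : AddCircle (2 * π) =>
        fun t : ℝ => x + ((min (max t 0) (π / 2) : ℝ) : AddCircle (2 * π)))) :
    (∀ t₀ : ℝ, q.map (fun z => z t₀) = AddCircle.haarAddCircle) ∧
    q {z : ℝ → AddCircle (2 * π) | ∀ t ≥ π / 2, z t = z (π / 2)} = 1 := by
  have hmeas : Measurable (fun x : AddCircle (2 * π) =>
      fun t : ℝ => x + ((min (max t 0) (π / 2) : ℝ) : AddCircle (2 * π))) :=
    measurable_pi_lambda _ fun t => measurable_add_const _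
  subst hq
  refine ⟨fun t₀ => ?_, le_antisymm ?_ ?_⟩
  · rw [Measure.map_map (measurable_pi_apply t₀) hmeas]
    exact map_add_right_eq_self AddCircle.haarAddCircle
      ((min (max t₀ 0) (π / 2) : ℝ) : AddCircle (2 * π))
  · have := Measure.isProbabilityMeasure_map
      (μ := AddCircle.haarAddCircle (T := 2 * π)) hmeas.aemeasurable
    exact prob_le_one
  · refine le_trans ?_ (Measure.le_map_apply hmeas.aemeasurable _)
    refine (measure_univ (μ := AddCircle.haarAddCircle (T := 2 * π))).ge.trans
      (measure_mono fun x _ t ht => ?_)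
    have h0 : min (max t 0) (π / 2) = π / 2 := min_eq_right (ht.trans (le_max_left _ _))
    have h1 : min (max (π / 2) 0) (π / 2) = π / 2 := min_eq_right (le_max_left _ _)
    simp only [h0, h1]
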